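/- Let r ≥ 2 and n ≥ 2. Any collection H of n pairwise disjoint r-element subsets of ℤ contains a sub-collection of size ⌊n^{1/(2^r−1)}/2⌋ in which every pair of sets realizes the same r-pattern. -/

import Mathlib

/-- A block `A^k B^k` (if `b = true`) or `B^k A^k` (if `b = false`), where `true` encodes
the letter A and `false` encodes the letter B. -/
def pblock (k : ℕ) (b : Bool) : List Bool :=
  if b then List.replicate k true ++ List.replicate k false
  else List.replicate k false ++ List.replicate k true

/-- An `r`-pattern: a string in `{A,B}^{2r}` starting with A, with `r` A's and `r` B's.
Here `true` encodes A and `false` encodes B. -/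
def IsPattern (r : ℕ) (P : List Bool) : Prop :=
  P.length = 2 * r ∧ P.count true = r ∧ P.head? = some true

/-- The pattern determined by the pair of disjoint finite sets `(e, f)`: list the elements of
`e ∪ f` in increasing order and record membership in `e` (A = `true`) vs `f` (B = `false`). -/
def patternOfPair (e f : Finset ℤ) : List Bool :=
  ((e ∪ f).sort (· ≤ ·)).map (fun x => decide (x ∈ e))

/-- The unordered pair `{e, f}` realizes the pattern `P`. -/
def Realizes (P : List Bool) (e f : Finset ℤ) : Prop :=
  patternOfPair e f = P ∨ patternOfPair f e = P

/-- A collection `S` is a `P`-clique if every pair of distinct members realizes the pattern `P`. -/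
def IsPClique (P : List Bool) (S : Finset (Finset ℤ)) : Prop :=
  ∀ e ∈ S, ∀ f ∈ S, e ≠ f → Realizes P e f

open Classical in
lemma omr_indep {α : Type} (R : α → α → Prop) (d : ℕ) : ∀ (N : ℕ) (F : Finset α), F.card = N →
    (∀ f ∈ F, (F.filter (fun e => R e f)).card ≤ d) →
    ∃ I ⊆ F, F.card ≤ (2 * d + 1) * I.card ∧ ∀ e ∈ I, ∀ f ∈ I, e ≠ f → ¬ R e f := by
  intro N
  induction N using Nat.strong_induction_on with
  | _ N ih =>
    intro F hN h
    rcases F.eq_empty_or_nonempty with rfl | hne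
    · exact ⟨∅, by simp, by simp, by simp⟩
    have hex : ∃ e ∈ F, (F.filter (fun f => R e f)).card ≤ d := by
      by_contra! hcon
      have h1 : ∑ e ∈ F, (F.filter (fun f => R e f)).card
          = ∑ f ∈ F, (F.filter (fun e => R e f)).card :=
        Finset.sum_card_bipartiteAbove_eq_sum_card_bipartiteBelow R
      have h2 := Finset.sum_le_sum h
      have h3 := Finset.sum_lt_sum_of_nonempty hne hcon
      omega
    obtain ⟨e, he, hd⟩ := hex
    set F' := F.filter (fun x => x ≠ e ∧ ¬ R e x ∧ ¬ R x e) with hF'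
    have hsub : F' ⊆ F := Finset.filter_subset _ _
    have hlt : F'.card < N := by
      rw [← hN]
      apply Finset.card_lt_card
      refine ⟨hsub, fun hh => ?_⟩
      have := hh he
      simp [hF'] at this
    obtain ⟨I, hI, hc, hind⟩ := ih _ hlt F' rfl (fun f hf =>
      (Finset.card_le_card (Finset.filter_subset_filter _ hsub)).trans (h f (hsub hf)))
    have heI : e ∉ I := fun hh => by
      have := hI hh
      simp [hF'] at this
    refine ⟨insert e I, ?_, ?_, ?_⟩
    · intro x hx
      rcases Finset.mem_insert.1 hx with rfl | hx
      · exact he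
      · exact hsub (hI hx)
    · rw [Finset.card_insert_of_notMem heI]
      have hcov : F ⊆ F' ∪ ({e} ∪ (F.filter (fun f => R e f) ∪ F.filter (fun f => R f e))) := by
        intro x hx
        simp only [hF', Finset.mem_union, Finset.mem_filter, Finset.mem_singleton]
        tauto
      have h1 := Finset.card_le_card hcov
      have h2 := Finset.card_union_le F' ({e} ∪ (F.filter (fun f => R e f) ∪ F.filter (fun f => R f e)))
      have h3 := Finset.card_union_le {e} (F.filter (fun f => R e f) ∪ F.filter (fun f => R f e))
      have h4 := Finset.card_union_le (F.filter (fun f => R e f)) (F.filter (fun f => R f e))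
      have h5 := h e he
      rw [Finset.card_singleton] at h3
      rw [mul_add]
      omega
    · intro a ha b hb hab
      rcases Finset.mem_insert.1 ha with ha | ha <;> rcases Finset.mem_insert.1 hb with hb | hb
      · exact absurd (ha.trans hb.symm) hab
      · have := hI hb
        simp only [hF', Finset.mem_filter] at this
        rw [ha]
        exact this.2.2.1
      · have := hI ha
        simp only [hF', Finset.mem_filter] at this
        rw [hb]
        exact this.2.2.2
      · exact hind a ha b hb hab

open Classical in
lemma omr_colors {α C : Type} [Fintype C] (R : C → α → α → Prop) (I : Finset α) (m : ℕ)
    (htr : ∀ c, ∀ x y z, R c x y → R c y z → R c x z)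
    (hirr : ∀ c x, ¬ R c x x)
    (htot : ∀ x ∈ I, ∀ y ∈ I, x ≠ y → ∃ c, R c x y ∨ R c y x)
    (hm : ∀ c, ∀ S ⊆ I, (∀ x ∈ S, ∀ y ∈ S, x ≠ y → R c x y ∨ R c y x) → S.card ≤ m) :
    I.card ≤ m ^ Fintype.card C := by
  let Q : C → α → Finset (Finset α) := fun c e => I.powerset.filter (fun S =>
    (∀ x ∈ S, ∀ y ∈ S, x ≠ y → R c x y ∨ R c y x) ∧ e ∈ S ∧ ∀ x ∈ S, x ≠ e → R c x e)
  let L : C → α → ℕ := fun c e => (Q c e).sup Finset.card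
  have hsing : ∀ c, ∀ e ∈ I, {e} ∈ Q c e := by
    intro c e he
    simp [Q, he]
  have hL1 : ∀ c, ∀ e ∈ I, 1 ≤ L c e := by
    intro c e he
    have := Finset.le_sup (f := Finset.card) (hsing c e he)
    rw [Finset.card_singleton] at this
    exact this
  have hLm : ∀ c, ∀ e ∈ I, L c e ≤ m := by
    intro c e he
    apply Finset.sup_le
    intro S hS
    simp only [Q, Finset.mem_filter, Finset.mem_powerset] at hS
    exact hm c S hS.1 hS.2.1
  have hLlt : ∀ c, ∀ e ∈ I, ∀ f ∈ I, R c e f → L c e < L c f := by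
    intro c e he f hf hR
    obtain ⟨S, hS, hSc⟩ := Finset.exists_mem_eq_sup (Q c e) ⟨_, hsing c e he⟩ Finset.card
    simp only [Q, Finset.mem_filter, Finset.mem_powerset] at hS
    obtain ⟨hSI, hch, heS, htop⟩ := hS
    have hall : ∀ x ∈ S, R c x f := by
      intro x hx
      by_cases hxe : x = e
      · rw [hxe]; exact hR
      · exact htr c _ _ _ (htop x hx hxe) hR
    have hfS : f ∉ S := fun hh => hirr c f (hall f hh)
    have hins : insert f S ∈ Q c f := by
      simp only [Q, Finset.mem_filter, Finset.mem_powerset]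
      refine ⟨?_, ?_, Finset.mem_insert_self _ _, ?_⟩
      · intro x hx
        rcases Finset.mem_insert.1 hx with rfl | hx
        · exact hf
        · exact hSI hx
      · intro a ha b hb hab
        rcases Finset.mem_insert.1 ha with ha | ha <;> rcases Finset.mem_insert.1 hb with hb | hb
        · exact absurd (ha.trans hb.symm) hab
        · rw [ha]
          exact Or.inr (hall b hb)
        · rw [hb]
          exact Or.inl (hall a ha)
        · exact hch a ha b hb hab
      · intro x hx hxf
        rcases Finset.mem_insert.1 hx with rfl | hx
        · exact absurd rfl hxf
        · exact hall x hx
    have := Finset.le_sup (f := Finset.card) hins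
    rw [Finset.card_insert_of_notMem hfS] at this
    change (Q c e).sup Finset.card < (Q c f).sup Finset.card
    omega
  let g : α → (C → ℕ) := fun e c => L c e
  have hmaps : ∀ e ∈ I, g e ∈ Fintype.piFinset (fun _ : C => Finset.Icc 1 m) := by
    intro e he
    simp only [Fintype.mem_piFinset, Finset.mem_Icc]
    exact fun c => ⟨hL1 c e he, hLm c e he⟩
  have hinj : Set.InjOn g I := by
    intro x hx y hy hxy
    by_contra hne
    obtain ⟨c, hc | hc⟩ := htot x hx y hy hne
    · have := hLlt c x hx y hy hc
      have h2 := congrFun hxy c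
      simp only [g] at h2
      omega
    · have := hLlt c y hy x hx hc
      have h2 := congrFun hxy c
      simp only [g] at h2
      omega
  have := Finset.card_le_card_of_injOn g hmaps hinj
  simpa using this

def omrStart (T : Finset ℕ) (i : ℕ) : ℕ := (T.filter (· ≤ i)).sup id

lemma omrStart_le (T : Finset ℕ) (i : ℕ) : omrStart T i ≤ i := by
  apply Finset.sup_le
  intro b hb
  exact (Finset.mem_filter.1 hb).2

lemma le_omrStart (T : Finset ℕ) (i k : ℕ) (hk : k ∈ T) (h : k ≤ i) : k ≤ omrStart T i :=
  Finset.le_sup (f := id) (Finset.mem_filter.2 ⟨hk, h⟩)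

lemma omrStart_mem (T : Finset ℕ) (i : ℕ) : omrStart T i = 0 ∨ omrStart T i ∈ T := by
  rcases (T.filter (· ≤ i)).eq_empty_or_nonempty with h | h
  · left
    simp [omrStart, h]
  · right
    obtain ⟨b, hb, hb'⟩ := Finset.exists_mem_eq_sup _ h id
    unfold omrStart
    rw [hb']
    exact (Finset.mem_filter.1 hb).1

lemma omrStart_self (T : Finset ℕ) (i : ℕ) (h : i ∈ T) : omrStart T i = i :=
  le_antisymm (omrStart_le T i) (le_omrStart T i i h le_rfl)

lemma omrStart_eq (T : Finset ℕ) (i j : ℕ) (hij : i ≤ j) (h : ∀ k ∈ T, i < k → j < k) :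
    omrStart T i = omrStart T j := by
  unfold omrStart
  congr 1
  ext k
  simp only [Finset.mem_filter]
  constructor
  · rintro ⟨h1, h2⟩
    exact ⟨h1, h2.trans hij⟩
  · rintro ⟨h1, h2⟩
    refine ⟨h1, ?_⟩
    by_contra hh
    have := h k h1 (by omega)
    omega

/-- tables -/
def OmrClq {α : Type} (r : ℕ) (v : α → ℕ → ℤ) (S : Finset α) : Prop :=
  ∃ M : ℕ → ℕ → Prop, M 0 0 ∧ ∀ e ∈ S, ∀ f ∈ S, e ≠ f →
    (∀ i < r, ∀ j < r, v e i < v f j ↔ M i j) ∨ (∀ i < r, ∀ j < r, v f i < v e j ↔ M i j)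

def OmrConf {α : Type} (r : ℕ) (v : α → ℕ → ℤ) (T : Finset ℕ) (e f : α) : Prop :=
  ∃ i ∈ Finset.Ico 1 r \ T, v e (i - 1) < v f (omrStart T i) ∧ v f (omrStart T i) ≤ v e i

lemma omr_block {α : Type} (r : ℕ) (v : α → ℕ → ℤ) (T : Finset ℕ) (e f : α)
    (hc : ¬ OmrConf r v T e f) :
    ∀ i < r, v e (omrStart T i) < v f (omrStart T i) → v e i < v f (omrStart T i) := by
  intro i
  induction i with
  | zero =>
    intro _ h
    have : omrStart T 0 = 0 := Nat.le_zero.1 (omrStart_le T 0)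
    rw [this] at h ⊢
    exact h
  | succ i ih =>
    intro hi h
    by_cases hT : i + 1 ∈ T
    · rw [omrStart_self T _ hT] at h ⊢
      exact h
    · have hs : omrStart T i = omrStart T (i + 1) := by
        apply omrStart_eq _ _ _ (by omega)
        intro k hk hik
        have : k ≠ i + 1 := fun hh => hT (hh ▸ hk)
        omega
      have h1 := ih (by omega) (by rw [hs]; exact h)
      rw [hs] at h1
      by_contra hcon
      apply hc
      refine ⟨i + 1, ?_, ?_, ?_⟩
      · simp [hT]; omega
      · simpa using h1
      · exact not_lt.1 hcon

lemma omr_alpha {α : Type} (r m : ℕ) (hr : 1 ≤ r) (v : α → ℕ → ℤ) (I : Finset α)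
    (T : Finset ℕ) (hT : T ⊆ Finset.Ico 1 r) (x : ℕ → ℤ)
    (hv : ∀ e ∈ I, ∀ i j, i < j → j < r → v e i < v e j)
    (hinj : ∀ e ∈ I, ∀ f ∈ I, e ≠ f → ∀ i < r, v e i ≠ v f i)
    (hx : ∀ e ∈ I, ∀ i ∈ T, v e (i - 1) < x i ∧ x i ≤ v e i)
    (hind : ∀ e ∈ I, ∀ f ∈ I, e ≠ f → ¬ OmrConf r v T e f)
    (hm : ∀ S ⊆ I, OmrClq r v S → S.card ≤ m) :
    I.card ≤ m ^ (2 ^ T.card) := by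
  classical
  have hle : ∀ e ∈ I, ∀ i j, i ≤ j → j < r → v e i ≤ v e j := by
    intro e he i j hij hj
    rcases hij.eq_or_lt with rfl | h
    · exact le_rfl
    · exact (hv e he i j h hj).le
  let R : {σ // σ ∈ T.powerset} → α → α → Prop := fun σ e f => v e 0 < v f 0 ∧
    ∀ j ∈ T, (j ∈ σ.1 → v e j < v f j) ∧ (j ∉ σ.1 → v f j < v e j)
  have hcard : Fintype.card {σ // σ ∈ T.powerset} = 2 ^ T.card := by
    rw [Fintype.card_coe, Finset.card_powerset]
  rw [← hcard]
  apply omr_colors R I m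
  · rintro c x y z ⟨h1, h2⟩ ⟨h3, h4⟩
    refine ⟨h1.trans h3, fun j hj => ⟨fun hjc => ?_, fun hjc => ?_⟩⟩
    · exact ((h2 j hj).1 hjc).trans ((h4 j hj).1 hjc)
    · exact ((h4 j hj).2 hjc).trans ((h2 j hj).2 hjc)
  · rintro c x ⟨h, _⟩
    exact lt_irrefl _ h
  · have key : ∀ x ∈ I, ∀ y ∈ I, x ≠ y → v x 0 < v y 0 → ∃ c, R c x y := by
      intro x hx y hy hxy h0
      refine ⟨⟨T.filter (fun j => v x j < v y j), by simp⟩, h0, fun j hj => ⟨?_, ?_⟩⟩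
      · intro h
        exact (Finset.mem_filter.1 h).2
      · intro h
        have h1 : ¬ v x j < v y j := fun hh => h (Finset.mem_filter.2 ⟨hj, hh⟩)
        have h2 := hinj x hx y hy hxy j (Finset.mem_Ico.1 (hT hj)).2
        omega
    intro x hx y hy hxy
    rcases lt_or_gt_of_ne (hinj x hx y hy hxy 0 (by omega)) with h | h
    · obtain ⟨c, hc⟩ := key x hx y hy hxy h
      exact ⟨c, Or.inl hc⟩
    · obtain ⟨c, hc⟩ := key y hy x hx hxy.symm h
      exact ⟨c, Or.inr hc⟩
  · intro c S hS hcl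
    apply hm S hS
    refine ⟨fun i j => (∃ k ∈ T, i < k ∧ k ≤ j) ∨ ((¬ ∃ k ∈ T, j < k ∧ k ≤ i) ∧
      (omrStart T i = 0 ∨ omrStart T i ∈ c.1)), ?_, ?_⟩
    · right
      refine ⟨?_, ?_⟩
      · rintro ⟨k, hk, h1, h2⟩
        omega
      · left
        exact Nat.le_zero.1 (omrStart_le T 0)
    have key : ∀ e ∈ I, ∀ f ∈ I, e ≠ f → R c e f → ∀ i < r, ∀ j < r, (v e i < v f j ↔
        ((∃ k ∈ T, i < k ∧ k ≤ j) ∨ ((¬ ∃ k ∈ T, j < k ∧ k ≤ i) ∧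
      (omrStart T i = 0 ∨ omrStart T i ∈ c.1)))) := by
      intro e he f hf hef hR i hi j hj
      by_cases h1 : ∃ k ∈ T, i < k ∧ k ≤ j
      · simp only [h1, true_or, iff_true]
        obtain ⟨k, hk, hik, hkj⟩ := h1
        have a1 := hle e he i (k - 1) (by omega) (by omega)
        have a2 := hx e he k hk
        have a3 := hx f hf k hk
        have a4 := hle f hf k j hkj hj
        omega
      by_cases h2 : ∃ k ∈ T, j < k ∧ k ≤ i
      · simp only [h1, h2, not_true, false_and, or_false, iff_false]
        obtain ⟨k, hk, hik, hkj⟩ := h2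
        have a1 := hle f hf j (k - 1) (by omega) (by omega)
        have a2 := hx e he k hk
        have a3 := hx f hf k hk
        have a4 := hle e he k i hkj hi
        omega
      have hs : omrStart T i = omrStart T j := by
        rcases le_total i j with hij | hij
        · apply omrStart_eq _ _ _ hij
          intro k hk hik
          by_contra hh
          exact h1 ⟨k, hk, hik, by omega⟩
        · symm
          apply omrStart_eq _ _ _ hij
          intro k hk hik
          by_contra hh
          exact h2 ⟨k, hk, hik, by omega⟩
      simp only [h1, h2, not_false_eq_true, true_and, false_or]
      have b1 := omr_block r v T e f (hind e he f hf hef) i hi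
      have b2 := omr_block r v T f e (hind f hf e he hef.symm) j hj
      have l1 := hle e he _ i (omrStart_le T i) hi
      have l2 := hle f hf _ j (omrStart_le T j) hj
      rw [← hs] at b2 l2
      have hcmp : v e (omrStart T i) < v f (omrStart T i) ↔
          (omrStart T i = 0 ∨ omrStart T i ∈ c.1) := by
        rcases omrStart_mem T i with h0 | h0
        · rw [h0]
          simp [hR.1]
        · have h3 := hR.2 _ h0
          have hne : omrStart T i ≠ 0 := by
            have := Finset.mem_Ico.1 (hT h0)
            omega
          simp only [hne, false_or]
          constructor
          · intro h4
            by_contra h5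
            have := h3.2 h5
            omega
          · exact h3.1
      rw [← hcmp]
      have hne := hinj e he f hf hef (omrStart T i) ((omrStart_le T i).trans_lt hi)
      constructor
      · intro h
        by_contra h4
        have := b2 (by omega)
        omega
      · intro h
        have := b1 h
        omega
    intro e he f hf hef
    rcases hcl e he f hf hef with h | h
    · exact Or.inl (key e (hS he) f (hS hf) hef h)
    · exact Or.inr (key f (hS hf) e (hS he) hef.symm h)

lemma omr_main {α : Type} (r m : ℕ) (hr : 1 ≤ r) (hm1 : 1 ≤ m) (v : α → ℕ → ℤ) : ∀ (s : ℕ)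
    (F : Finset α) (T : Finset ℕ) (_ : T ⊆ Finset.Ico 1 r) (_ : T.card + s + 1 = r) (x : ℕ → ℤ)
    (_ : ∀ e ∈ F, ∀ i j, i < j → j < r → v e i < v e j)
    (_ : ∀ e ∈ F, ∀ f ∈ F, e ≠ f → ∀ i < r, v e i ≠ v f i)
    (_ : ∀ e ∈ F, ∀ i ∈ T, v e (i - 1) < x i ∧ x i ≤ v e i)
    (_ : ∀ S ⊆ F, OmrClq r v S → S.card ≤ m),
    F.card ≤ 3 ^ s * s.factorial * m ^ (2 ^ r - 2 ^ T.card) := by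
  classical
  intro s
  induction s with
  | zero =>
    intro F T hT hs x hv hinj hx hm
    have := omr_alpha r m hr v F T hT x hv hinj hx ?_ hm
    · have h2 : 2 ^ r - 2 ^ T.card = 2 ^ T.card := by
        have : r = T.card + 1 := by omega
        have h3 : 2 ^ r = 2 ^ T.card * 2 := by rw [this, pow_succ]
        omega
      rw [h2]
      simpa using this
    · rintro e he f hf hef ⟨i, hi, _⟩
      have hTe : T = Finset.Ico 1 r := by
        apply Finset.eq_of_subset_of_card_le hT
        simp
        omega
      rw [hTe] at hi
      simp at hi
  | succ s ih =>
    intro F T hT hs x hv hinj hx hm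
    set K := 3 ^ s * s.factorial * m ^ (2 ^ r - 2 ^ (T.card + 1)) with hK
    have hK1 : 1 ≤ K := by
      have : 0 < K := by positivity
      exact this
    have hcompl : (Finset.Ico 1 r \ T).card = s + 1 := by
      rw [Finset.card_sdiff_of_subset hT]
      simp
      omega
    have hdeg : ∀ f ∈ F, (F.filter (fun e => OmrConf r v T e f)).card ≤ (s + 1) * K := by
      intro f hf
      have hsub : F.filter (fun e => OmrConf r v T e f) ⊆ (Finset.Ico 1 r \ T).biUnion
          (fun i => F.filter (fun e => v e (i - 1) < v f (omrStart T i) ∧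
            v f (omrStart T i) ≤ v e i)) := by
        intro e he
        obtain ⟨heF, i, hi, hh⟩ := Finset.mem_filter.1 he
        exact Finset.mem_biUnion.2 ⟨i, hi, Finset.mem_filter.2 ⟨heF, hh⟩⟩
      refine (Finset.card_le_card hsub).trans ?_
      rw [← hcompl]
      apply Finset.card_biUnion_le_card_mul
      intro i hi
      obtain ⟨hi1, hi2⟩ := Finset.mem_sdiff.1 hi
      have hsubF := Finset.filter_subset (fun e => v e (i - 1) < v f (omrStart T i) ∧
            v f (omrStart T i) ≤ v e i) F
      have := ih (F.filter (fun e => v e (i - 1) < v f (omrStart T i) ∧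
            v f (omrStart T i) ≤ v e i)) (insert i T) ?_ ?_
            (Function.update x i (v f (omrStart T i))) ?_ ?_ ?_ ?_
      · rw [Finset.card_insert_of_notMem hi2] at this
        exact this
      · intro k hk
        rcases Finset.mem_insert.1 hk with rfl | hk
        · exact hi1
        · exact hT hk
      · rw [Finset.card_insert_of_notMem hi2]
        omega
      · exact fun e he => hv e (hsubF he)
      · exact fun e he f hf => hinj e (hsubF he) f (hsubF hf)
      · intro e he k hk
        rcases Finset.mem_insert.1 hk with rfl | hk
        · simpa using (Finset.mem_filter.1 he).2
        · have : k ≠ i := fun hh => hi2 (hh ▸ hk)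
          rw [Function.update_of_ne this]
          exact hx e (hsubF he) k hk
      · exact fun S hS => hm S (hS.trans hsubF)
    obtain ⟨I, hIF, hIc, hI⟩ := omr_indep (OmrConf r v T) _ F.card F rfl hdeg
    have hα := omr_alpha r m hr v I T hT x (fun e he => hv e (hIF he))
      (fun e he f hf => hinj e (hIF he) f (hIF hf)) (fun e he => hx e (hIF he)) hI
      (fun S hS => hm S (hS.trans hIF))
    have hexp : 2 ^ r - 2 ^ T.card = (2 ^ r - 2 ^ (T.card + 1)) + 2 ^ T.card := by
      have : 2 ^ (T.card + 1) ≤ 2 ^ r := Nat.pow_le_pow_right (by norm_num) (by omega)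
      rw [pow_succ] at this ⊢
      omega
    calc F.card ≤ (2 * ((s + 1) * K) + 1) * I.card := hIc
      _ ≤ (3 * ((s + 1) * K)) * m ^ (2 ^ T.card) := by
          apply Nat.mul_le_mul _ hα
          nlinarith
      _ = _ := by
          rw [hexp, pow_add m, hK, Nat.factorial_succ]
          ring

lemma omr_const (s : ℕ) : 3 ^ s * s.factorial ≤ 2 ^ (2 ^ (s + 1) - 1) := by
  induction s with
  | zero => simp
  | succ s ih =>
    have h1 : 3 * (s + 1) ≤ 2 ^ (2 ^ (s + 1)) := by
      have h2 : s + 1 ≤ 2 ^ s := Nat.lt_two_pow_self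
      have h3 : 2 * (s + 1) ≤ 2 ^ (s + 1) := by rw [pow_succ]; omega
      have h4 : 2 ^ (2 * (s + 1)) ≤ 2 ^ (2 ^ (s + 1)) := Nat.pow_le_pow_right (by norm_num) h3
      refine le_trans ?_ h4
      have h5 : s + 1 + 1 ≤ 2 ^ (s + 1) := Nat.lt_two_pow_self
      rw [two_mul, pow_add]
      nlinarith
    have h6 : 2 ^ (s + 1 + 1) - 1 = 2 ^ (s + 1) + (2 ^ (s + 1) - 1) := by
      have : 1 ≤ 2 ^ (s + 1) := Nat.one_le_two_pow
      rw [pow_succ 2 (s + 1)]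
      omega
    rw [h6, pow_add 2 (2 ^ (s + 1)), pow_succ 3, Nat.factorial_succ]
    calc 3 ^ s * 3 * ((s + 1) * s.factorial) = (3 * (s + 1)) * (3 ^ s * s.factorial) := by ring
      _ ≤ 2 ^ (2 ^ (s + 1)) * 2 ^ (2 ^ (s + 1) - 1) := Nat.mul_le_mul h1 ih

def omrV (e : Finset ℤ) (i : ℕ) : ℤ := (e.sort (· ≤ ·)).getD i 0

lemma omrV_lt (e : Finset ℤ) (i j : ℕ) (hij : i < j) (hj : j < e.card) : omrV e i < omrV e j := by
  have h := (Finset.sortedLT_sort e).pairwise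
  have hl : (e.sort (· ≤ ·)).length = e.card := Finset.length_sort _
  unfold omrV
  rw [List.getD_eq_getElem _ _ (by omega), List.getD_eq_getElem _ _ (by omega)]
  exact List.pairwise_iff_getElem.1 h i j (by omega) (by omega) hij

lemma omrV_mem (e : Finset ℤ) (i : ℕ) (hi : i < e.card) : omrV e i ∈ e := by
  have hl : (e.sort (· ≤ ·)).length = e.card := Finset.length_sort _
  unfold omrV
  rw [List.getD_eq_getElem _ _ (by omega)]
  exact (Finset.mem_sort (· ≤ ·)).1 (List.getElem_mem _)

lemma omrV_ex (e : Finset ℤ) (x : ℤ) (hx : x ∈ e) : ∃ i < e.card, x = omrV e i := by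
  have hl : (e.sort (· ≤ ·)).length = e.card := Finset.length_sort _
  obtain ⟨i, hi, h⟩ := List.mem_iff_getElem.1 ((Finset.mem_sort (· ≤ ·)).2 hx)
  refine ⟨i, by omega, ?_⟩
  unfold omrV
  rw [List.getD_eq_getElem _ _ (by omega)]
  exact h.symm

lemma omrV_lt_iff (e : Finset ℤ) (i j : ℕ) (hi : i < e.card) (hj : j < e.card) :
    omrV e i < omrV e j ↔ i < j := by
  constructor
  · intro h
    by_contra hh
    rcases (not_lt.1 hh).eq_or_lt with h1 | h1
    · rw [h1] at h
      exact lt_irrefl _ h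
    · exact lt_asymm h (omrV_lt e j i h1 hi)
  · exact fun h => omrV_lt e i j h hj

lemma omr_pattern_eq (r : ℕ) (e f e' f' : Finset ℤ) (he : e.card = r) (hf : f.card = r)
    (he' : e'.card = r) (hf' : f'.card = r) (hd : Disjoint e f) (hd' : Disjoint e' f')
    (h : ∀ i < r, ∀ j < r, omrV e i < omrV f j ↔ omrV e' i < omrV f' j) :
    patternOfPair e f = patternOfPair e' f' := by
  have hex : ∀ x, ∃ y, x ∈ e ∪ f → (∃ i < r, x = omrV e i ∧ y = omrV e' i) ∨
      (∃ i < r, x = omrV f i ∧ y = omrV f' i) := by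
    intro x
    by_cases hx : x ∈ e ∪ f
    · rcases Finset.mem_union.1 hx with hx | hx
      · obtain ⟨i, hi, hh⟩ := omrV_ex e x hx
        exact ⟨omrV e' i, fun _ => Or.inl ⟨i, by omega, hh, rfl⟩⟩
      · obtain ⟨i, hi, hh⟩ := omrV_ex f x hx
        exact ⟨omrV f' i, fun _ => Or.inr ⟨i, by omega, hh, rfl⟩⟩
    · exact ⟨0, fun hh => absurd hh hx⟩
  choose φ hφ using hex
  have hne : ∀ i < r, ∀ j < r, omrV e i ≠ omrV f j := fun i hi j hj hh =>
    Finset.disjoint_left.1 hd (omrV_mem e i (by omega)) (hh ▸ omrV_mem f j (by omega))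
  have hne' : ∀ i < r, ∀ j < r, omrV e' i ≠ omrV f' j := fun i hi j hj hh =>
    Finset.disjoint_left.1 hd' (omrV_mem e' i (by omega)) (hh ▸ omrV_mem f' j (by omega))
  have hmono : ∀ x ∈ e ∪ f, ∀ y ∈ e ∪ f, x < y → φ x < φ y := by
    intro x hx y hy hxy
    rcases hφ x hx with ⟨i, hi, h1, h2⟩ | ⟨i, hi, h1, h2⟩ <;>
    rcases hφ y hy with ⟨j, hj, h3, h4⟩ | ⟨j, hj, h3, h4⟩ <;>
    rw [h2, h4] <;> rw [h1, h3] at hxy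
    · rw [omrV_lt_iff _ _ _ (by omega) (by omega)] at hxy ⊢
      exact hxy
    · exact (h i hi j hj).1 hxy
    · have a1 := h j hj i hi
      have a2 := hne' j hj i hi
      have a3 : ¬ omrV e j < omrV f i := by omega
      rw [a1] at a3
      omega
    · rw [omrV_lt_iff _ _ _ (by omega) (by omega)] at hxy ⊢
      exact hxy
  have hφe : ∀ i < r, φ (omrV e i) = omrV e' i := by
    intro i hi
    rcases hφ (omrV e i) (Finset.mem_union_left _ (omrV_mem e i (by omega))) with
      ⟨j, hj, h1, h2⟩ | ⟨j, hj, h1, h2⟩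
    · have : i = j := by
        rcases lt_trichotomy i j with hh | hh | hh
        · have := omrV_lt e i j hh (by omega)
          omega
        · exact hh
        · have := omrV_lt e j i hh (by omega)
          omega
      rw [h2, this]
    · exact absurd h1 (hne i hi j hj)
  have hφf : ∀ i < r, φ (omrV f i) = omrV f' i := by
    intro i hi
    rcases hφ (omrV f i) (Finset.mem_union_right _ (omrV_mem f i (by omega))) with
      ⟨j, hj, h1, h2⟩ | ⟨j, hj, h1, h2⟩
    · exact absurd h1.symm (hne j hj i hi)
    · have : i = j := by
        rcases lt_trichotomy i j with hh | hh | hh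
        · have := omrV_lt f i j hh (by omega)
          omega
        · exact hh
        · have := omrV_lt f j i hh (by omega)
          omega
      rw [h2, this]
  have hsorted : ((((e ∪ f).sort (· ≤ ·)).map φ)).Pairwise (· < ·) := by
    rw [List.pairwise_map]
    refine List.Pairwise.imp_of_mem ?_ (Finset.sortedLT_sort (e ∪ f)).pairwise
    intro a b ha hb hab
    exact hmono a ((Finset.mem_sort _).1 ha) b ((Finset.mem_sort _).1 hb) hab
  have hmem : ∀ y, y ∈ ((e ∪ f).sort (· ≤ ·)).map φ ↔ y ∈ (e' ∪ f').sort (· ≤ ·) := by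
    intro y
    simp only [List.mem_map, Finset.mem_sort]
    constructor
    · rintro ⟨x, hx, rfl⟩
      rcases hφ x hx with ⟨i, hi, h1, h2⟩ | ⟨i, hi, h1, h2⟩
      · rw [h2]; exact Finset.mem_union_left _ (omrV_mem _ _ (by omega))
      · rw [h2]; exact Finset.mem_union_right _ (omrV_mem _ _ (by omega))
    · intro hy
      rcases Finset.mem_union.1 hy with hy | hy
      · obtain ⟨i, hi, rfl⟩ := omrV_ex _ _ hy
        exact ⟨omrV e i, Finset.mem_union_left _ (omrV_mem _ _ (by omega)), hφe i (by omega)⟩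
      · obtain ⟨i, hi, rfl⟩ := omrV_ex _ _ hy
        exact ⟨omrV f i, Finset.mem_union_right _ (omrV_mem _ _ (by omega)), hφf i (by omega)⟩
  have heq : ((e ∪ f).sort (· ≤ ·)).map φ = (e' ∪ f').sort (· ≤ ·) := by
    have hs' := (Finset.sortedLT_sort (e' ∪ f')).pairwise
    have hp : (((e ∪ f).sort (· ≤ ·)).map φ).Perm ((e' ∪ f').sort (· ≤ ·)) :=
      (List.perm_ext_iff_of_nodup (hsorted.imp ne_of_lt) (hs'.imp ne_of_lt)).2 hmem
    exact hp.eq_of_pairwise (fun a b _ _ h1 h2 => absurd h1 (lt_asymm h2)) hsorted hs'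
  unfold patternOfPair
  rw [← heq, List.map_map]
  apply List.map_congr_left
  intro x hx
  have hx' := (Finset.mem_sort _).1 hx
  simp only [Function.comp]
  rcases hφ x hx' with ⟨i, hi, h1, h2⟩ | ⟨i, hi, h1, h2⟩
  · have a1 : x ∈ e := h1 ▸ omrV_mem _ _ (by omega)
    have a2 : φ x ∈ e' := h2 ▸ omrV_mem _ _ (by omega)
    simp [a1, a2]
  · have a1 : x ∉ e := Finset.disjoint_right.1 hd (h1 ▸ omrV_mem _ _ (by omega))
    have a2 : φ x ∉ e' := Finset.disjoint_right.1 hd' (h2 ▸ omrV_mem _ _ (by omega))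
    simp [a1, a2]

lemma omr_isPattern (r : ℕ) (hr : 1 ≤ r) (e f : Finset ℤ) (he : e.card = r) (hf : f.card = r)
    (hd : Disjoint e f) (h : omrV e 0 < omrV f 0) : IsPattern r (patternOfPair e f) := by
  refine ⟨?_, ?_, ?_⟩
  · simp [patternOfPair, Finset.card_union_of_disjoint hd, he, hf]
    omega
  · unfold patternOfPair
    rw [List.count, List.countP_map, List.countP_eq_length_filter]
    have hnd : (((e ∪ f).sort (· ≤ ·)).filter ((fun x => x == true) ∘ fun x => decide (x ∈ e))).Nodup :=
      (Finset.sort_nodup _ _).filter _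
    rw [← List.toFinset_card_of_nodup hnd, ← he]
    congr 1
    ext x
    simp
  · unfold patternOfPair
    rw [List.head?_map]
    rcases hl : (e ∪ f).sort (· ≤ ·) with _ | ⟨a, t⟩
    · have : omrV e 0 ∈ (e ∪ f).sort (· ≤ ·) :=
        (Finset.mem_sort _).2 (Finset.mem_union_left _ (omrV_mem e 0 (by omega)))
      rw [hl] at this
      simp at this
    · have hs := (Finset.sortedLT_sort (e ∪ f)).pairwise
      rw [hl] at hs
      have h1 := (List.pairwise_cons.1 hs).1
      have h0 : omrV e 0 ∈ (e ∪ f).sort (· ≤ ·) :=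
        (Finset.mem_sort _).2 (Finset.mem_union_left _ (omrV_mem e 0 (by omega)))
      rw [hl] at h0
      have hle : a ≤ omrV e 0 := by
        rcases List.mem_cons.1 h0 with h2 | h2
        · exact h2.ge
        · exact (h1 _ h2).le
      have ha : a ∈ e ∪ f := (Finset.mem_sort (· ≤ ·)).1 (by rw [hl]; simp)
      rcases Finset.mem_union.1 ha with ha | ha
      · simp [ha]
      · obtain ⟨j, hj, hh⟩ := omrV_ex f a ha
        rcases Nat.eq_zero_or_pos j with h3 | h3
        · rw [h3] at hh
          omega
        · have := omrV_lt f 0 j h3 hj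
          omega

/-- **Sharp Ramsey theorem for ordered matchings.** Any collection of `n ≥ 2` pairwise disjoint
`r`-element subsets of `ℤ` (`r ≥ 2`) contains a sub-collection of size
`⌊n^(1/(2^r - 1)) / 2⌋` in which every pair of sets realizes the same `r`-pattern. -/
theorem ordered_matching_ramsey (r n : ℕ) (hr : 2 ≤ r) (hn : 2 ≤ n)
    (H : Finset (Finset ℤ)) (hn' : H.card = n)
    (hcard : ∀ e ∈ H, e.card = r)
    (hdisj : ∀ e ∈ H, ∀ f ∈ H, e ≠ f → Disjoint e f) :
    ∃ P : List Bool, IsPattern r P ∧ ∃ S ⊆ H, IsPClique P S ∧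
      S.card = ⌊((n : ℝ) ^ ((1 : ℝ) / (2 ^ r - 1)) / 2)⌋₊ := by
  set k := ⌊((n : ℝ) ^ ((1 : ℝ) / (2 ^ r - 1)) / 2)⌋₊ with hk
  have hE : 1 ≤ 2 ^ r - 1 := by
    have : 2 ^ 1 ≤ 2 ^ r := Nat.pow_le_pow_right (by norm_num) (by omega)
    omega
  have hkn : (2 * k) ^ (2 ^ r - 1) ≤ n := by
    have h0 : (0 : ℝ) ≤ (n : ℝ) ^ ((1 : ℝ) / (2 ^ r - 1)) := by positivity
    have h1 : (k : ℝ) ≤ (n : ℝ) ^ ((1 : ℝ) / (2 ^ r - 1)) / 2 := Nat.floor_le (by positivity)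
    have h2 : (2 * k : ℝ) ≤ (n : ℝ) ^ ((1 : ℝ) / (2 ^ r - 1)) := by linarith
    have h3 : (2 * k : ℝ) ^ (2 ^ r - 1) ≤ ((n : ℝ) ^ ((1 : ℝ) / (2 ^ r - 1))) ^ (2 ^ r - 1) :=
      pow_le_pow_left₀ (by positivity) h2 _
    have hc : ((2 ^ r - 1 : ℕ) : ℝ) = 2 ^ r - 1 := by
      rw [Nat.cast_sub Nat.one_le_two_pow]
      simp
    rw [← hc, one_div, Real.rpow_inv_natCast_pow (by positivity) (by omega)] at h3
    exact_mod_cast h3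
  rcases Nat.lt_or_ge k 2 with hk2 | hk2
  · obtain ⟨S, hS, hSc⟩ := Finset.exists_subset_card_eq (s := H) (n := k) (by omega)
    refine ⟨List.replicate r true ++ List.replicate r false, ⟨?_, ?_, ?_⟩, S, hS, ?_, hSc⟩
    · simp; omega
    · simp [List.count_replicate]
    · obtain ⟨r, rfl⟩ : ∃ q, r = q + 1 := ⟨r - 1, by omega⟩
      simp [List.replicate_succ]
    · intro e he f hf hef
      exact absurd (Finset.card_le_one.1 (by omega) e he f hf) hef
  have hex : ∃ S ⊆ H, OmrClq r omrV S ∧ k ≤ S.card := by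
    by_contra! hcon
    have hb := omr_main r (k - 1) (by omega) (by omega) omrV (r - 1) H ∅ (by simp)
      (by simp; omega) (fun _ => 0)
      (fun e he i j hij hj => omrV_lt e i j hij (by rw [hcard e he]; exact hj))
      (fun e he f hf hef i hi hh => Finset.disjoint_left.1 (hdisj e he f hf hef)
        (omrV_mem e i (by rw [hcard e he]; exact hi))
        (hh ▸ omrV_mem f i (by rw [hcard f hf]; exact hi)))
      (by simp) (fun S hS hcl => by have := hcon S hS hcl; omega)
    have hc := omr_const (r - 1)
    rw [show r - 1 + 1 = r by omega] at hc
    simp only [Finset.card_empty, pow_zero] at hb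
    have h1 : H.card ≤ 2 ^ (2 ^ r - 1) * (k - 1) ^ (2 ^ r - 1) :=
      hb.trans (Nat.mul_le_mul_right _ hc)
    have h2 : (k - 1) ^ (2 ^ r - 1) < k ^ (2 ^ r - 1) :=
      Nat.pow_lt_pow_left (by omega) (by omega)
    have h3 : 2 ^ (2 ^ r - 1) * (k - 1) ^ (2 ^ r - 1) < 2 ^ (2 ^ r - 1) * k ^ (2 ^ r - 1) :=
      Nat.mul_lt_mul_of_pos_left h2 (by positivity)
    rw [mul_pow] at hkn
    omega
  obtain ⟨S₀, hS₀, ⟨M, hM0, hM⟩, hkS⟩ := hex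
  obtain ⟨S, hS, hSc⟩ := Finset.exists_subset_card_eq hkS
  have key : ∃ e ∈ S, ∃ f ∈ S, e ≠ f ∧ ∀ i < r, ∀ j < r, omrV e i < omrV f j ↔ M i j := by
    obtain ⟨e, he, f, hf, hef⟩ := Finset.one_lt_card.1 (show 1 < S.card by omega)
    rcases hM e (hS he) f (hS hf) hef with h | h
    · exact ⟨e, he, f, hf, hef, h⟩
    · exact ⟨f, hf, e, he, hef.symm, h⟩
  obtain ⟨e, he, f, hf, hef, h⟩ := key
  have hSH : S ⊆ H := hS.trans hS₀
  refine ⟨patternOfPair e f, ?_, S, hSH, ?_, hSc⟩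
  · exact omr_isPattern r (by omega) e f (hcard e (hSH he)) (hcard f (hSH hf))
      (hdisj e (hSH he) f (hSH hf) hef) ((h 0 (by omega) 0 (by omega)).2 hM0)
  · intro a ha b hb hab
    have aux : ∀ a ∈ S, ∀ b ∈ S, a ≠ b → (∀ i < r, ∀ j < r, omrV a i < omrV b j ↔ M i j) →
        patternOfPair a b = patternOfPair e f := by
      intro a ha b hb hab hh
      apply omr_pattern_eq r a b e f (hcard a (hSH ha)) (hcard b (hSH hb)) (hcard e (hSH he))
        (hcard f (hSH hf)) (hdisj a (hSH ha) b (hSH hb) hab) (hdisj e (hSH he) f (hSH hf) hef)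
      intro i hi j hj
      rw [hh i hi j hj, h i hi j hj]
    rcases hM a (hS ha) b (hS hb) hab with hh | hh
    · exact Or.inl (aux a ha b hb hab hh)
    · exact Or.inr (aux b hb a ha hab.symm hh)
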